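/- Let (F,G) : (L,R) → (L',R') be a commutation datum such that F preserves coequalizers of reflexive pairs, and suppose the comparison functors R₁ and R₁' (induced by the adjunctions (L,R) and (L',R') via their Eilenberg–Moore categories) have left adjoints L₁ and L₁'. Then G lifts to a functor G₁ between the Eilenberg–Moore categories, given by G₁(B,μ) = (GB, Gμ ∘ R'ζB), satisfying U'G₁ = GU and G₁R₁ = R₁'F, and (F,G₁) : (L₁,R₁) → (L₁',R₁') is again a commutation datum. -/

import Mathlib

open CategoryTheory CategoryTheory.Limits

/-- Commutation datum: the adjunctions fit into a commutative square `R' ∘ F = G ∘ R`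
and the canonical natural transformation `ζ : L'G ⟶ FL` (determined by
`R'ζ ∘ η'G = Gη`) is an isomorphism. -/
def IsCommutationDatum
    {A B A' B' : Type*} [Category A] [Category B] [Category A'] [Category B']
    {L : B ⥤ A} {R : A ⥤ B} {L' : B' ⥤ A'} {R' : A' ⥤ B'}
    (adj : L ⊣ R) (adj' : L' ⊣ R')
    (F : A ⥤ A') (G : B ⥤ B') (e : F ⋙ R' = R ⋙ G) : Prop :=
  ∃ ζ : G ⋙ L' ⟶ L ⋙ F, IsIso ζ ∧ ∀ b : B,
    adj'.unit.app (G.obj b) ≫ R'.map (ζ.app b) ≫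
      eqToHom (Functor.congr_obj e (L.obj b)) = G.map (adj.unit.app b)

namespace CommDatum

section Coeq
variable {A B : Type*} [Category A] [Category B] {L : B ⥤ A} {R : A ⥤ B} (adj : L ⊣ R)
  {L₁ : adj.toMonad.Algebra ⥤ A} (adj₁ : L₁ ⊣ Monad.comparison adj)

/-- The structure map, with syntactically convenient type. -/
def act (M : adj.toMonad.Algebra) : R.obj (L.obj M.A) ⟶ M.A := M.a

lemma act_unit (M : adj.toMonad.Algebra) : adj.unit.app M.A ≫ act adj M = 𝟙 M.A := M.unit

lemma act_assoc (M : adj.toMonad.Algebra) :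
    R.map (adj.counit.app (L.obj M.A)) ≫ act adj M = R.map (L.map (act adj M)) ≫ act adj M :=
  M.assoc

lemma act_hom {M N : adj.toMonad.Algebra} (f : M ⟶ N) :
    R.map (L.map f.f) ≫ act adj N = act adj M ≫ f.f := f.h

/-- The unit of the second adjunction, with convenient type. -/
def un (M : adj.toMonad.Algebra) : M.A ⟶ R.obj (L₁.obj M) := (adj₁.unit.app M).f

/-- The canonical map `L B ⟶ L₁ (B, μ)`. -/
def proj (M : adj.toMonad.Algebra) : L.obj M.A ⟶ L₁.obj M :=
  (adj.homEquiv M.A (L₁.obj M)).symm (un adj adj₁ M)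

/-- The first leg. -/
def leg (M : adj.toMonad.Algebra) : L.obj (R.obj (L.obj M.A)) ⟶ L.obj M.A := L.map (act adj M)

lemma unit_proj (M : adj.toMonad.Algebra) :
    adj.unit.app M.A ≫ R.map (proj adj adj₁ M) = un adj adj₁ M := by
  have := (adj.homEquiv M.A (L₁.obj M)).apply_symm_apply (un adj adj₁ M)
  rwa [Adjunction.homEquiv_unit] at this

/-- Algebra maps into the comparison object are the same as maps coequalizing. -/
lemma alg_iff (M : adj.toMonad.Algebra) {X : A} (g : L.obj M.A ⟶ X) :
    leg adj M ≫ g = adj.counit.app (L.obj M.A) ≫ g ↔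
    R.map (L.map (adj.unit.app M.A ≫ R.map g)) ≫ R.map (adj.counit.app X)
      = act adj M ≫ adj.unit.app M.A ≫ R.map g := by
  have h1 : L.map (adj.unit.app M.A ≫ R.map g) ≫ adj.counit.app X = g := by simp
  rw [← R.map_comp, h1]
  have h2 : act adj M ≫ adj.unit.app M.A ≫ R.map g
      = adj.unit.app _ ≫ R.map (leg adj M ≫ g) := by
    have := adj.unit.naturality (act adj M)
    dsimp at this
    simp only [leg, Functor.map_comp]
    rw [reassoc_of% this]
  have h3 : R.map g = adj.unit.app _ ≫ R.map (adj.counit.app (L.obj M.A) ≫ g) := by simp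
  rw [h2]
  constructor
  · intro h
    rw [h]; exact h3
  · intro h
    apply (adj.homEquiv _ _).injective
    rw [Adjunction.homEquiv_unit, Adjunction.homEquiv_unit]
    exact h.symm.trans h3

lemma proj_cond (M : adj.toMonad.Algebra) :
    leg adj M ≫ proj adj adj₁ M = adj.counit.app (L.obj M.A) ≫ proj adj adj₁ M := by
  rw [alg_iff, unit_proj]
  exact (adj₁.unit.app M).h

lemma proj_desc (M : adj.toMonad.Algebra) {X : A} (g : L.obj M.A ⟶ X)
    (hg : leg adj M ≫ g = adj.counit.app (L.obj M.A) ≫ g) :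
    ∃ k : L₁.obj M ⟶ X, proj adj adj₁ M ≫ k = g := by
  let h : M ⟶ (Monad.comparison adj).obj X := ⟨adj.unit.app M.A ≫ R.map g, (alg_iff adj M g).1 hg⟩
  refine ⟨(adj₁.homEquiv _ _).symm h, ?_⟩
  apply (adj.homEquiv _ _).injective
  rw [Adjunction.homEquiv_unit, Adjunction.homEquiv_unit, R.map_comp, ← Category.assoc, unit_proj]
  have := (adj₁.homEquiv _ _).apply_symm_apply h
  rw [Adjunction.homEquiv_unit] at this
  exact congrArg Monad.Algebra.Hom.f this

lemma proj_epi (M : adj.toMonad.Algebra) {X : A} (k k' : L₁.obj M ⟶ X)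
    (h : proj adj adj₁ M ≫ k = proj adj adj₁ M ≫ k') : k = k' := by
  apply (adj₁.homEquiv _ _).injective
  rw [Adjunction.homEquiv_unit, Adjunction.homEquiv_unit]
  apply Monad.Algebra.Hom.ext
  change un adj adj₁ M ≫ R.map k = un adj adj₁ M ≫ R.map k'
  rw [← unit_proj, Category.assoc, Category.assoc, ← R.map_comp, ← R.map_comp, h]

/-- `L₁ M` is a coequalizer. -/
noncomputable def projIsColimit (M : adj.toMonad.Algebra) :
    IsColimit (Cofork.ofπ (proj adj adj₁ M) (proj_cond adj adj₁ M)) :=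
  Cofork.IsColimit.mk' _ (fun s =>
    ⟨(proj_desc adj adj₁ M s.π s.condition).choose,
     (proj_desc adj adj₁ M s.π s.condition).choose_spec,
     fun hm => proj_epi adj adj₁ M _ _
      (hm.trans (proj_desc adj adj₁ M s.π s.condition).choose_spec.symm)⟩)

lemma leg_reflexive (M : adj.toMonad.Algebra) :
    IsReflexivePair (leg adj M) (adj.counit.app (L.obj M.A)) := by
  refine ⟨L.map (adj.unit.app M.A), ?_, by simp⟩
  rw [leg, ← L.map_comp, act_unit, L.map_id]

end Coeq

section Alg
variable {A B A' B' : Type*} [Category A] [Category B] [Category A'] [Category B']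
    {L : B ⥤ A} {R : A ⥤ B} {L' : B' ⥤ A'} {R' : A' ⥤ B'}
    (adj : L ⊣ R) (adj' : L' ⊣ R')
    {F : A ⥤ A'} {G : B ⥤ B'} (θ : F ⋙ R' ≅ R ⋙ G)
    (ζ : G ⋙ L' ⟶ L ⋙ F)
    (hζ : ∀ b : B, adj'.unit.app (G.obj b) ≫ R'.map (ζ.app b) ≫ θ.hom.app (L.obj b)
      = G.map (adj.unit.app b))

include hζ in
lemma counit_eq (X : A) : L'.map (θ.hom.app X) ≫ ζ.app (R.obj X) ≫ F.map (adj.counit.app X)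
    = adj'.counit.app (F.obj X) := by
  apply (adj'.homEquiv _ _).injective
  rw [Adjunction.homEquiv_unit, Adjunction.homEquiv_unit, ← cancel_mono (θ.hom.app X)]
  have n1 := adj'.unit.naturality (θ.hom.app X)
  have n2 := θ.hom.naturality (adj.counit.app X)
  have n3 := hζ (R.obj X)
  dsimp at n1 n2 n3
  simp only [Functor.map_comp, Category.assoc]
  dsimp
  erw [← reassoc_of% n1, n2, reassoc_of% n3]
  rw [← G.map_comp]
  simp

/-- Structure map. -/
def str (M : adj.toMonad.Algebra) : R'.obj (L'.obj (G.obj M.A)) ⟶ G.obj M.A :=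
  R'.map (ζ.app M.A) ≫ θ.hom.app (L.obj M.A) ≫ G.map (act adj M)

include hζ in
lemma str_unit (M : adj.toMonad.Algebra) :
    adj'.unit.app (G.obj M.A) ≫ str adj θ ζ M = 𝟙 _ := by
  have n := hζ M.A
  simp only [str]
  rw [reassoc_of% n, ← G.map_comp]
  rw [act_unit, G.map_id]
  rfl

include hζ in
lemma leg_eq (M : adj.toMonad.Algebra) :
    L'.map (R'.map (ζ.app M.A)) ≫ L'.map (θ.hom.app (L.obj M.A)) ≫ ζ.app (R.obj (L.obj M.A)) ≫
      F.map (adj.counit.app (L.obj M.A)) = adj'.counit.app (L'.obj (G.obj M.A)) ≫ ζ.app M.A := by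
  rw [counit_eq adj adj' θ ζ hζ]
  exact adj'.counit.naturality (ζ.app M.A)

lemma leg_eq' (M : adj.toMonad.Algebra) :
    L'.map (R'.map (ζ.app M.A)) ≫ L'.map (θ.hom.app (L.obj M.A)) ≫ ζ.app (R.obj (L.obj M.A)) ≫
      F.map (leg adj M) = L'.map (str adj θ ζ M) ≫ ζ.app M.A := by
  have n := ζ.naturality (act adj M)
  dsimp at n
  simp only [str, Functor.map_comp, Category.assoc]
  rw [n]
  rfl

include hζ in
lemma str_assoc (M : adj.toMonad.Algebra) :
    R'.map (adj'.counit.app (L'.obj (G.obj M.A))) ≫ str adj θ ζ M =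
      R'.map (L'.map (str adj θ ζ M)) ≫ str adj θ ζ M := by
  have h1 := congrArg R'.map (leg_eq adj adj' θ ζ hζ M)
  have h2 := congrArg R'.map (leg_eq' adj θ ζ M)
  have n1 := θ.hom.naturality (adj.counit.app (L.obj M.A))
  have n2 := θ.hom.naturality (leg adj M)
  have h3 : G.map (R.map (adj.counit.app (L.obj M.A))) ≫ G.map (act adj M)
      = G.map (R.map (leg adj M)) ≫ G.map (act adj M) := by
    rw [← G.map_comp, ← G.map_comp]
    exact congrArg G.map (act_assoc adj M)
  dsimp at n1 n2
  rw [Functor.map_comp, Functor.map_comp, Functor.map_comp, Functor.map_comp] at h1 h2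
  have k1 : R'.map (adj'.counit.app (L'.obj (G.obj M.A))) ≫ str adj θ ζ M =
    (R'.map (adj'.counit.app (L'.obj (G.obj M.A))) ≫ R'.map (ζ.app M.A)) ≫
      θ.hom.app (L.obj M.A) ≫ G.map (act adj M) := by simp [str]
  have k2 : R'.map (L'.map (str adj θ ζ M)) ≫ str adj θ ζ M =
    (R'.map (L'.map (str adj θ ζ M)) ≫ R'.map (ζ.app M.A)) ≫
      θ.hom.app (L.obj M.A) ≫ G.map (act adj M) := by
    rw [Category.assoc]; rfl
  rw [k1, k2]
  erw [← h1, ← h2]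
  simp only [Category.assoc]
  erw [reassoc_of% n1, reassoc_of% n2, h3]

/-- The lifted functor. -/
def lift : adj.toMonad.Algebra ⥤ adj'.toMonad.Algebra where
  obj M :=
    { A := G.obj M.A
      a := str adj θ ζ M
      unit := str_unit adj adj' θ ζ hζ M
      assoc := str_assoc adj adj' θ ζ hζ M }
  map {M N} f :=
    { f := G.map f.f
      h := by
        change R'.map (L'.map (G.map f.f)) ≫ str adj θ ζ N = str adj θ ζ M ≫ G.map f.f
        have n1 := ζ.naturality f.f
        have n2 := θ.hom.naturality (L.map f.f)
        have n3 := act_hom adj f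
        dsimp at n1 n2
        simp only [str, Category.assoc]
        rw [← R'.map_comp_assoc, n1, R'.map_comp_assoc, reassoc_of% n2, ← G.map_comp, n3,
          G.map_comp] }
  map_id M := by apply Monad.Algebra.Hom.ext; exact G.map_id _
  map_comp f g := by apply Monad.Algebra.Hom.ext; exact G.map_comp _ _

include hζ in
lemma comp_str (X : A) :
    R'.map (L'.map (θ.hom.app X)) ≫ str adj θ ζ ((Monad.comparison adj).obj X)
      = R'.map (adj'.counit.app (F.obj X)) ≫ θ.hom.app X := by
  have n := θ.hom.naturality (adj.counit.app X)
  dsimp at n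
  rw [← counit_eq adj adj' θ ζ hζ X]
  simp only [Functor.map_comp, Category.assoc]
  rw [n]
  rfl

include hζ in
lemma proj_comp (b : B) {C : A'} {X : A} (π : L'.obj (G.obj b) ⟶ C) (u : G.obj b ⟶ R'.obj C)
    (z : C ⟶ F.obj X) (v : G.obj b ⟶ R'.obj (F.obj X)) (p : L.obj b ⟶ X) (w : b ⟶ R.obj X)
    (h0 : adj'.unit.app (G.obj b) ≫ R'.map π = u) (h1 : u ≫ R'.map z = v)
    (h2 : v ≫ θ.hom.app X = G.map w) (h3 : adj.unit.app b ≫ R.map p = w) :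
    π ≫ z = ζ.app b ≫ F.map p := by
  apply (adj'.homEquiv _ _).injective
  rw [Adjunction.homEquiv_unit, Adjunction.homEquiv_unit, R'.map_comp, R'.map_comp,
    reassoc_of% h0, h1, ← cancel_mono (θ.hom.app X), h2, ← h3, G.map_comp, ← hζ b]
  have n := θ.hom.naturality p
  dsimp at n
  simp only [Category.assoc]
  rw [← n]

include hζ in
lemma isIso_of [IsIso ζ] (M : adj.toMonad.Algebra) {C : A'} {X : A}
    (π : L'.obj (G.obj M.A) ⟶ C)
    (hπ : L'.map (str adj θ ζ M) ≫ π = adj'.counit.app (L'.obj (G.obj M.A)) ≫ π)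
    (epi : ∀ {Y : A'} (k k' : C ⟶ Y), π ≫ k = π ≫ k' → k = k')
    (p : L.obj M.A ⟶ X) (hp : leg adj M ≫ p = adj.counit.app (L.obj M.A) ≫ p)
    (hc : IsColimit (Cofork.ofπ p hp))
    [PreservesColimit (parallelPair (leg adj M) (adj.counit.app (L.obj M.A))) F]
    (z : C ⟶ F.obj X) (hz : π ≫ z = ζ.app M.A ≫ F.map p) : IsIso z := by
  have hc := isColimitCoforkMapOfIsColimit F _ hc
  have hcond : F.map (leg adj M) ≫ inv (ζ.app M.A) ≫ π =
      F.map (adj.counit.app (L.obj M.A)) ≫ inv (ζ.app M.A) ≫ π := by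
    rw [← cancel_epi (ζ.app (R.obj (L.obj M.A))),
      ← cancel_epi (L'.map (θ.hom.app (L.obj M.A))),
      ← cancel_epi (L'.map (R'.map (ζ.app M.A)))]
    have l1 := leg_eq adj adj' θ ζ hζ M
    have l2 := leg_eq' (L' := L') adj θ ζ M
    have q1 := congrArg (· ≫ inv (ζ.app M.A) ≫ π) l1
    have q2 := congrArg (· ≫ inv (ζ.app M.A) ≫ π) l2
    simp only [Category.assoc, IsIso.hom_inv_id_assoc] at q1 q2
    exact q2.trans (hπ.trans q1.symm)
  obtain ⟨w, hw⟩ := Cofork.IsColimit.desc' hc _ hcond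
  change F.map p ≫ w = _ at hw
  refine ⟨w, ?_, ?_⟩
  · apply epi
    rw [reassoc_of% hz]
    erw [hw]
    simp
  · apply Cofork.IsColimit.hom_ext hc
    change F.map p ≫ w ≫ z = F.map p ≫ 𝟙 _
    rw [reassoc_of% hw, hz]
    simp

end Alg

lemma alg_ext {C : Type*} [Category C] {T : Monad C} (M N : T.Algebra) (h : M.A = N.A)
    (h' : T.map (eqToHom h) ≫ N.a = M.a ≫ eqToHom h) : M = N := by
  cases M; cases N
  dsimp at h
  subst h
  simp at h'
  subst h'
  rfl

lemma eqToHom_f {C : Type*} [Category C] {T : Monad C} (M N : T.Algebra) (h : M = N) :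
    (eqToHom h).f = eqToHom (congrArg Monad.Algebra.A h) := by
  subst h; rfl

end CommDatum

open CommDatum

/-- Let `(F,G) : (L,R) → (L',R')` be a commutation datum (with canonical
isomorphism `ζ`) such that `F` preserves coequalizers of reflexive pairs, and suppose the
comparison functors `R₁ = Monad.comparison adj` and `R₁' = Monad.comparison adj'` have
left adjoints `L₁` and `L₁'`.  Then `G` lifts to a functor `G₁` between the
Eilenberg–Moore categories, given on objects by `G₁(B,μ) = (GB, Gμ ∘ R'ζB)` and on
morphisms by `G₁ f = G f`, satisfying `U' ∘ G₁ = G ∘ U` and `G₁ ∘ R₁ = R₁' ∘ F`, and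
`(F,G₁) : (L₁,R₁) → (L₁',R₁')` is again a commutation datum. -/
theorem commutation_datum_lifts_to_EilenbergMoore
    {A B A' B' : Type*} [Category A] [Category B] [Category A'] [Category B']
    {L : B ⥤ A} {R : A ⥤ B} {L' : B' ⥤ A'} {R' : A' ⥤ B'}
    (adj : L ⊣ R) (adj' : L' ⊣ R')
    (F : A ⥤ A') (G : B ⥤ B') (e : F ⋙ R' = R ⋙ G)
    (ζ : G ⋙ L' ⟶ L ⋙ F) (hζiso : IsIso ζ)
    (hζ : ∀ b : B, adj'.unit.app (G.obj b) ≫ R'.map (ζ.app b) ≫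
        eqToHom (Functor.congr_obj e (L.obj b)) = G.map (adj.unit.app b))
    (hF : ∀ {X Y : A} (f g : X ⟶ Y), IsReflexivePair f g →
        Nonempty (PreservesColimit (parallelPair f g) F))
    (L₁ : adj.toMonad.Algebra ⥤ A) (adj₁ : L₁ ⊣ Monad.comparison adj)
    (L₁' : adj'.toMonad.Algebra ⥤ A') (adj₁' : L₁' ⊣ Monad.comparison adj') :
    ∃ (G₁ : adj.toMonad.Algebra ⥤ adj'.toMonad.Algebra)
      (hcomm : G₁ ⋙ adj'.toMonad.forget = adj.toMonad.forget ⋙ G)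
      (hcomp : F ⋙ Monad.comparison adj' = Monad.comparison adj ⋙ G₁),
      (∀ M : adj.toMonad.Algebra,
        adj'.toMonad.toFunctor.map (eqToHom (Functor.congr_obj hcomm M)) ≫
            R'.map (ζ.app M.A) ≫ eqToHom (Functor.congr_obj e (L.obj M.A)) ≫
            G.map M.a
          = (G₁.obj M).a ≫ eqToHom (Functor.congr_obj hcomm M)) ∧
      (∀ {M N : adj.toMonad.Algebra} (f : M ⟶ N),
        (G₁.map f).f ≫ eqToHom (Functor.congr_obj hcomm N)
          = eqToHom (Functor.congr_obj hcomm M) ≫ G.map f.f) ∧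
      IsCommutationDatum adj₁ adj₁' F G₁ hcomp := by
  have hθ : ∀ X, (eqToIso e).hom.app X = eqToHom (Functor.congr_obj e X) := fun X => by
    simp [eqToHom_app]
  have hζ' : ∀ b : B, adj'.unit.app (G.obj b) ≫ R'.map (ζ.app b) ≫
      (eqToIso e).hom.app (L.obj b) = G.map (adj.unit.app b) := fun b => by
    rw [hθ]; exact hζ b
  have hobj : ∀ X, (F ⋙ Monad.comparison adj').obj X =
      (Monad.comparison adj ⋙ lift adj adj' (eqToIso e) ζ hζ').obj X := fun X => by
    refine alg_ext _ _ (Functor.congr_obj e X) ?_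
    have := comp_str adj adj' (eqToIso e) ζ hζ' X
    rw [hθ] at this
    exact this
  have hcomp : F ⋙ Monad.comparison adj' =
      Monad.comparison adj ⋙ lift adj adj' (eqToIso e) ζ hζ' := by
    refine CategoryTheory.Functor.ext hobj ?_
    intro X Y f
    apply Monad.Algebra.Hom.ext
    rw [Monad.Algebra.comp_f, Monad.Algebra.comp_f, eqToHom_f, eqToHom_f]
    exact Functor.congr_hom e f
  refine ⟨lift adj adj' (eqToIso e) ζ hζ', rfl, hcomp, ?_, ?_, ?_⟩
  · intro M
    rw [← hθ]
    change R'.map (L'.map (𝟙 (G.obj M.A))) ≫ str adj (eqToIso e) ζ M =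
      str adj (eqToIso e) ζ M ≫ 𝟙 _
    simp
  · intro M N f
    change G.map f.f ≫ 𝟙 _ = 𝟙 _ ≫ G.map f.f
    simp
  · let G₁ := lift adj adj' (eqToIso e) ζ hζ'
    let φ : ∀ M, G₁.obj M ⟶ (Monad.comparison adj').obj (F.obj (L₁.obj M)) := fun M =>
      G₁.map (adj₁.unit.app M) ≫ (eqToHom hcomp.symm).app (L₁.obj M)
    have hφ : ∀ {M N} (f : M ⟶ N), G₁.map f ≫ φ N =
        φ M ≫ (Monad.comparison adj').map (F.map (L₁.map f)) := fun {M N} f => by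
      have n1 := adj₁.unit.naturality f
      have n2 := (eqToHom hcomp.symm).naturality (L₁.map f)
      have n3 := congrArg G₁.map n1
      simp only [Functor.map_comp] at n3
      simp only [φ, Category.assoc]
      erw [← n2, ← Category.assoc, n3, Category.assoc]
      rfl
    let ζ₁ : G₁ ⋙ L₁' ⟶ L₁ ⋙ F :=
      { app := fun M => (adj₁'.homEquiv _ _).symm (φ M)
        naturality := fun M N f => by
          dsimp
          rw [← Adjunction.homEquiv_naturality_left_symm, hφ,
            Adjunction.homEquiv_naturality_right_symm] }
    have hζ₁ : ∀ M, adj₁'.unit.app (G₁.obj M) ≫ (Monad.comparison adj').map (ζ₁.app M) = φ M :=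
      fun M => by
        have := (adj₁'.homEquiv _ _).apply_symm_apply (φ M)
        rwa [Adjunction.homEquiv_unit] at this
    have hφf : ∀ M, (φ M).f ≫ (eqToIso e).hom.app (L₁.obj M) = G.map (un adj adj₁ M) :=
      fun M => by
        simp only [φ]
        rw [Monad.Algebra.comp_f, eqToHom_app, eqToHom_f, hθ]
        erw [Category.assoc, eqToHom_trans, eqToHom_refl, Category.comp_id]
        rfl
    have hπ : ∀ M, proj adj' adj₁' (G₁.obj M) ≫ ζ₁.app M =
        ζ.app M.A ≫ F.map (proj adj adj₁ M) := fun M => by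
      exact proj_comp adj adj' (eqToIso e) ζ hζ' M.A (proj adj' adj₁' (G₁.obj M))
        (un adj' adj₁' (G₁.obj M)) (ζ₁.app M) (φ M).f (proj adj adj₁ M) (un adj adj₁ M)
        (unit_proj adj' adj₁' (G₁.obj M)) (congrArg Monad.Algebra.Hom.f (hζ₁ M)) (hφf M)
        (unit_proj adj adj₁ M)
    refine ⟨ζ₁, ?_, ?_⟩
    · have : ∀ M, IsIso (ζ₁.app M) := fun M => by
        obtain ⟨hp⟩ := hF _ _ (leg_reflexive adj M)
        exact isIso_of adj adj' (eqToIso e) ζ hζ' M (proj adj' adj₁' (G₁.obj M))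
          (proj_cond adj' adj₁' (G₁.obj M)) (proj_epi adj' adj₁' (G₁.obj M))
          (proj adj adj₁ M) _ (projIsColimit adj adj₁ M) (ζ₁.app M) (hπ M)
      exact NatIso.isIso_of_isIso_app ζ₁
    · intro M
      have h := hζ₁ M
      rw [← Category.assoc]
      erw [h]
      simp only [φ]
      rw [Category.assoc, eqToHom_app]
      erw [eqToHom_trans, eqToHom_refl, Category.comp_id]
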